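/- For every infinite sequence ā = (a(1), a(2), …) with a(i) > 0 for all i (and a(i) ≤ 1), and every constant ε > 0, there exist a sequence p̄ obtained from ā by inserting some zero terms (i.e., p(j) = a(i) if j = f(i) for a strictly increasing f : ℕ → ℕ, and p(j) = 0 otherwise) and a first-order sentence ψ of the language L_≤ such that limsup_{n→∞} Prob(n,p̄;ψ) = 1 and liminf_{n→∞} Prob(n,p̄;ψ) ≤ ε. -/

import Mathlib

open FirstOrder Filter

namespace RandomGraph

/-- The set of potential edges of a graph on `Fin n` (pairs `(v,w)` with `v < w`).
Vertex `v : Fin n` represents the number `v + 1` of the interval `[n] = {1, …, n}`. -/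
abbrev EdgeIdx (n : ℕ) := {e : Fin n × Fin n // e.1 < e.2}

/-- An outcome of the random graph on `[n]`: a choice of which potential edges are present. -/
abbrev Sample (n : ℕ) := EdgeIdx n → Bool

/-- Adjacency of two vertices (described by their values in `Fin n`) in the outcome `ω`. -/
def adjVal {n : ℕ} (ω : Sample n) (a b : ℕ) : Prop :=
  ∃ e : EdgeIdx n, ω e = true ∧
    ((e.1.1.val = a ∧ e.1.2.val = b) ∨ (e.1.1.val = b ∧ e.1.2.val = a))

/-- Adjacency of two vertices in the outcome `ω`. -/
def sampleAdj {n : ℕ} (ω : Sample n) (v w : Fin n) : Prop := adjVal ω v.val w.val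

/-- The probability of the outcome `ω` in the model `G(n, p̄)`: each pair of distinct
vertices at distance `d` is an edge with probability `p d`, independently.  (The value `p 0` is
never used, since distinct vertices are at distance at least 1.) -/
noncomputable def sampleWeight (p : ℕ → ℝ) {n : ℕ} (ω : Sample n) : ℝ :=
  ∏ e : EdgeIdx n,
    (if ω e then p (e.1.2.val - e.1.1.val) else 1 - p (e.1.2.val - e.1.1.val))

/-- The probability of the outcome `ω` in the circular model `C(n, p̄)`: vertices `v, w` are
adjacent with probability `p (min |v-w| (n - |v-w|))`, independently. -/
noncomputable def cWeight (p : ℕ → ℝ) {n : ℕ} (ω : Sample n) : ℝ :=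
  ∏ e : EdgeIdx n,
    (if ω e then p (min (e.1.2.val - e.1.1.val) (n - (e.1.2.val - e.1.1.val)))
      else 1 - p (min (e.1.2.val - e.1.1.val) (n - (e.1.2.val - e.1.1.val))))

open scoped Classical in
/-- The probability of the event `P` in the random graph `G(n, p̄)`. -/
noncomputable def Pr (p : ℕ → ℝ) (n : ℕ) (P : Sample n → Prop) : ℝ :=
  ∑ ω : Sample n, if P ω then sampleWeight p ω else 0

open scoped Classical in
/-- The probability of the event `P` in the circular random graph `C(n, p̄)`. -/
noncomputable def cPr (p : ℕ → ℝ) (n : ℕ) (P : Sample n → Prop) : ℝ :=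
  ∑ ω : Sample n, if P ω then cWeight p ω else 0

/-! ### The language `L` of graphs (also used as the language `L^c`) -/

/-- An outcome `ω` of the random graph, viewed as a structure of `FirstOrder.Language.graph`,
the language with a single binary adjacency predicate. -/
def graphStructure {n : ℕ} (ω : Sample n) : Language.graph.Structure (Fin n) where
  RelMap | .adj => fun x => sampleAdj ω (x 0) (x 1)

/-- Satisfaction of a sentence of the language `L` in the outcome `ω`. -/
def SatL {n : ℕ} (ω : Sample n) (ψ : Language.graph.Sentence) : Prop :=
  @Language.Sentence.Realize _ _ (graphStructure ω) ψ

/-- `Prob(n, p̄; ψ)` for a sentence `ψ` of the language `L`. -/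
noncomputable def ProbL (p : ℕ → ℝ) (n : ℕ) (ψ : Language.graph.Sentence) : ℝ :=
  Pr p n fun ω => SatL ω ψ

/-- The probability that `C(n, p̄)` satisfies a sentence `ψ` of the language `L^c = L`. -/
noncomputable def cProbL (p : ℕ → ℝ) (n : ℕ) (ψ : Language.graph.Sentence) : ℝ :=
  cPr p n fun ω => SatL ω ψ

/-! ### The language `L₊` -/

/-- The constants of the language `L₊`: the first element `1` and the last element `n`. -/
inductive plusFunc : ℕ → Type
  | one : plusFunc 0
  | last : plusFunc 0

/-- The relations of `L₊`: adjacency and successor. -/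
inductive plusRel : ℕ → Type
  | adj : plusRel 2
  | succ : plusRel 2

/-- The language `L₊` with adjacency, successor (`x = y + 1`), and constants `1` and `n`. -/
def Lplus : Language := ⟨plusFunc, plusRel⟩

/-- An outcome `ω` of the random graph on `[m+1]`, as an `L₊`-structure. -/
def plusStructure {m : ℕ} (ω : Sample (m + 1)) : Lplus.Structure (Fin (m + 1)) where
  funMap | .one => fun _ => 0 | .last => fun _ => Fin.last m
  RelMap
    | .adj => fun x => sampleAdj ω (x 0) (x 1)
    | .succ => fun x => (x 0).val = (x 1).val + 1

/-- `Prob(n, p̄; ψ)` for a sentence `ψ` of `L₊` (set to `0` in the irrelevant case `n = 0`,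
where the constants cannot be interpreted). -/
noncomputable def ProbPlus (p : ℕ → ℝ) : ℕ → Lplus.Sentence → ℝ
  | 0, _ => 0
  | (m + 1), ψ => Pr p (m + 1) fun ω => @Language.Sentence.Realize _ _ (plusStructure ω) ψ

/-! ### The language `L≤` -/

/-- The relations of `L≤`: adjacency and linear order. -/
inductive leRel : ℕ → Type
  | adj : leRel 2
  | le : leRel 2

/-- The language `L≤` with adjacency and a linear order. -/
def Lle : Language := ⟨fun _ => Empty, leRel⟩

/-- An outcome `ω` of the random graph on `[n]`, as an `L≤`-structure. -/
def leStructure {n : ℕ} (ω : Sample n) : Lle.Structure (Fin n) where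
  funMap := fun f _ => Empty.elim f
  RelMap
    | .adj => fun x => sampleAdj ω (x 0) (x 1)
    | .le => fun x => x 0 ≤ x 1

/-- Satisfaction of a sentence of `L≤` in the outcome `ω`. -/
def SatLe {n : ℕ} (ω : Sample n) (ψ : Lle.Sentence) : Prop :=
  @Language.Sentence.Realize _ _ (leStructure ω) ψ

/-- `Prob(n, p̄; ψ)` for a sentence `ψ` of `L≤`. -/
noncomputable def ProbLe (p : ℕ → ℝ) (n : ℕ) (ψ : Lle.Sentence) : ℝ :=
  Pr p n fun ω => SatLe ω ψ

/-! ### The circular languages `L₊^c` and `L≤^c` -/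

/-- The relations of `L₊^c`: adjacency and cyclic successor. -/
inductive plusCRel : ℕ → Type
  | adj : plusCRel 2
  | succ : plusCRel 2

/-- The language `L₊^c`, with adjacency and cyclic successor (`x = y + 1 (mod n)`). -/
def LplusC : Language := ⟨fun _ => Empty, plusCRel⟩

/-- An outcome `ω` of the circular random graph on `[n]`, as an `L₊^c`-structure. -/
def plusCStructure {n : ℕ} (ω : Sample n) : LplusC.Structure (Fin n) where
  funMap := fun f _ => Empty.elim f
  RelMap
    | .adj => fun x => sampleAdj ω (x 0) (x 1)
    | .succ => fun x => (x 0).val = ((x 1).val + 1) % n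

/-- The probability that `C(n, p̄)` satisfies a sentence `ψ` of the language `L₊^c`. -/
noncomputable def cProbPlus (p : ℕ → ℝ) (n : ℕ) (ψ : LplusC.Sentence) : ℝ :=
  cPr p n fun ω => @Language.Sentence.Realize _ _ (plusCStructure ω) ψ

/-- The relations of `L≤^c`: adjacency and the ternary clockwise-order predicate. -/
inductive cycRel : ℕ → Type
  | adj : cycRel 2
  | btw : cycRel 3

/-- The language `L≤^c`, with adjacency and the ternary clockwise-order predicate `C`. -/
def Lcyc : Language := ⟨fun _ => Empty, cycRel⟩

/-- `C(a, b, c)`: `a ≤ b ≤ c` holds after some cyclic permutation of `(a, b, c)`. -/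
def cyclicBtw {n : ℕ} (a b c : Fin n) : Prop :=
  (a ≤ b ∧ b ≤ c) ∨ (b ≤ c ∧ c ≤ a) ∨ (c ≤ a ∧ a ≤ b)

/-- An outcome `ω` of the circular random graph on `[n]`, as an `L≤^c`-structure. -/
def cycStructure {n : ℕ} (ω : Sample n) : Lcyc.Structure (Fin n) where
  funMap := fun f _ => Empty.elim f
  RelMap
    | .adj => fun x => sampleAdj ω (x 0) (x 1)
    | .btw => fun x => cyclicBtw (x 0) (x 1) (x 2)

/-- Satisfaction of a sentence of `L≤^c` in the outcome `ω`. -/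
def SatCyc {n : ℕ} (ω : Sample n) (ψ : Lcyc.Sentence) : Prop :=
  @Language.Sentence.Realize _ _ (cycStructure ω) ψ

/-- The probability that `C(n, p̄)` satisfies a sentence `ψ` of the language `L≤^c`. -/
noncomputable def cProbCyc (p : ℕ → ℝ) (n : ℕ) (ψ : Lcyc.Sentence) : ℝ :=
  cPr p n fun ω => SatCyc ω ψ


/-! ### Elementary probability on the finite product space -/

/-- Expectation of a real-valued function of the outcome. -/
noncomputable def Ex (p : ℕ → ℝ) (n : ℕ) (X : Sample n → ℝ) : ℝ :=
  ∑ ω : Sample n, sampleWeight p ω * X ω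

/-- The length of an edge. -/
def elen {n : ℕ} (e : EdgeIdx n) : ℕ := e.1.2.val - e.1.1.val

lemma sampleWeight_nonneg {p : ℕ → ℝ} (hp : ∀ j, 0 ≤ p j ∧ p j ≤ 1) {n : ℕ} (ω : Sample n) :
    0 ≤ sampleWeight p ω := by
  unfold sampleWeight
  refine Finset.prod_nonneg fun e _ => ?_
  have := hp (e.1.2.val - e.1.1.val)
  split_ifs <;> linarith

lemma Ex_absent (p : ℕ → ℝ) (n : ℕ) (D : Finset (EdgeIdx n)) :
    Ex p n (fun ω => ∏ e ∈ D, if ω e then (0 : ℝ) else 1) = ∏ e ∈ D, (1 - p (elen e)) := by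
  classical
  have h1 : ∀ ω : Sample n, sampleWeight p ω * (∏ e ∈ D, if ω e then (0 : ℝ) else 1)
      = ∏ e : EdgeIdx n, ((if ω e then p (elen e) else 1 - p (elen e)) *
          (if e ∈ D then (if ω e then (0 : ℝ) else 1) else 1)) := by
    intro ω
    rw [Finset.prod_mul_distrib]
    congr 1
    rw [Finset.prod_ite_mem, Finset.univ_inter]
  unfold Ex
  rw [Finset.sum_congr rfl fun ω _ => h1 ω]
  have h2 := Finset.prod_univ_sum (fun _ : EdgeIdx n => (Finset.univ : Finset Bool))
    (fun e b => ((if b then p (elen e) else 1 - p (elen e)) *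
          (if e ∈ D then (if b then (0 : ℝ) else 1) else 1)))
  rw [Fintype.piFinset_univ] at h2
  rw [← h2]
  have h3 : ∀ e : EdgeIdx n, (∑ b : Bool, ((if b then p (elen e) else 1 - p (elen e)) *
          (if e ∈ D then (if b then (0 : ℝ) else 1) else 1)))
          = if e ∈ D then 1 - p (elen e) else 1 := by
    intro e
    by_cases he : e ∈ D <;> simp [he]
  rw [Finset.prod_congr rfl fun e _ => h3 e]
  rw [Finset.prod_ite_mem, Finset.univ_inter]

lemma Ex_blocks (p : ℕ → ℝ) (n : ℕ) {ι : Type} [DecidableEq ι] (B : ι → Finset (EdgeIdx n))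
    (T : Finset ι) (hB : ∀ s ∈ T, ∀ t ∈ T, s ≠ t → Disjoint (B s) (B t)) :
    ∀ D : Finset (EdgeIdx n), (∀ t ∈ T, Disjoint D (B t)) →
    Ex p n (fun ω => (∏ e ∈ D, if ω e then (0 : ℝ) else 1) *
      ∏ t ∈ T, (1 - ∏ e ∈ B t, if ω e then (0 : ℝ) else 1))
      = (∏ e ∈ D, (1 - p (elen e))) * ∏ t ∈ T, (1 - ∏ e ∈ B t, (1 - p (elen e))) := by
  classical
  induction T using Finset.induction_on with
  | empty => intro D _; simpa using Ex_absent p n D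
  | insert t T ht ih =>
    intro D hD
    have hB' : ∀ s ∈ T, ∀ t ∈ T, s ≠ t → Disjoint (B s) (B t) := fun s hs t ht =>
      hB s (Finset.mem_insert_of_mem hs) t (Finset.mem_insert_of_mem ht)
    have hd : Disjoint D (B t) := hD t (Finset.mem_insert_self _ _)
    have i1 := ih hB' D (fun s hs => hD s (Finset.mem_insert_of_mem hs))
    have i2 := ih hB' (D ∪ B t) (fun s hs => by
      rw [Finset.disjoint_union_left]
      refine ⟨hD s (Finset.mem_insert_of_mem hs), ?_⟩
      apply hB t (Finset.mem_insert_self _ _) s (Finset.mem_insert_of_mem hs)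
      rintro rfl; exact ht hs)
    simp only [Finset.prod_union hd] at i2
    simp only [Finset.prod_insert ht]
    have h3 : ∀ X Y Z : Sample n → ℝ, Ex p n (fun ω => X ω * ((1 - Y ω) * Z ω))
        = Ex p n (fun ω => X ω * Z ω) - Ex p n (fun ω => X ω * Y ω * Z ω) := by
      intro X Y Z
      unfold Ex
      rw [← Finset.sum_sub_distrib]
      refine Finset.sum_congr rfl fun ω _ => by ring
    rw [h3, i1, i2]
    ring

open scoped Classical in
lemma Pr_eq_Ex (p : ℕ → ℝ) (n : ℕ) (P : Sample n → Prop) :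
    Pr p n P = Ex p n (fun ω => if P ω then 1 else 0) := by
  unfold Pr Ex
  refine Finset.sum_congr rfl fun ω _ => ?_
  by_cases h : P ω <;> simp [h]

lemma Ex_mono {p : ℕ → ℝ} (hp : ∀ j, 0 ≤ p j ∧ p j ≤ 1) {n : ℕ} {X Y : Sample n → ℝ}
    (h : ∀ ω, X ω ≤ Y ω) : Ex p n X ≤ Ex p n Y := by
  unfold Ex
  exact Finset.sum_le_sum fun ω _ => mul_le_mul_of_nonneg_left (h ω) (sampleWeight_nonneg hp ω)

lemma Ex_one (p : ℕ → ℝ) (n : ℕ) : Ex p n (fun _ => 1) = 1 := by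
  simpa using Ex_absent p n ∅

lemma Pr_mono {p : ℕ → ℝ} (hp : ∀ j, 0 ≤ p j ∧ p j ≤ 1) {n : ℕ} {P Q : Sample n → Prop}
    (h : ∀ ω, P ω → Q ω) : Pr p n P ≤ Pr p n Q := by
  classical
  rw [Pr_eq_Ex, Pr_eq_Ex]
  refine Ex_mono hp fun ω => ?_
  have := h ω
  by_cases h1 : P ω
  · simp [h1, this h1]
  · by_cases h2 : Q ω <;> simp [h1, h2]

lemma Pr_nonneg {p : ℕ → ℝ} (hp : ∀ j, 0 ≤ p j ∧ p j ≤ 1) {n : ℕ} (P : Sample n → Prop) :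
    0 ≤ Pr p n P := by
  classical
  unfold Pr
  refine Finset.sum_nonneg fun ω _ => ?_
  split_ifs
  · exact sampleWeight_nonneg hp ω
  · exact le_rfl

lemma Pr_compl (p : ℕ → ℝ) {n : ℕ} (P : Sample n → Prop) :
    Pr p n P + Pr p n (fun ω => ¬ P ω) = 1 := by
  classical
  rw [← Ex_one p n, Pr_eq_Ex, Pr_eq_Ex]
  unfold Ex
  rw [← Finset.sum_add_distrib]
  refine Finset.sum_congr rfl fun ω _ => ?_
  by_cases h : P ω <;> simp [h]

lemma Pr_le_one {p : ℕ → ℝ} (hp : ∀ j, 0 ≤ p j ∧ p j ≤ 1) {n : ℕ} (P : Sample n → Prop) :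
    Pr p n P ≤ 1 := by
  have := Pr_compl p P
  have := Pr_nonneg hp (fun ω => ¬ P ω)
  linarith

lemma Pr_or {p : ℕ → ℝ} (hp : ∀ j, 0 ≤ p j ∧ p j ≤ 1) {n : ℕ} (P Q : Sample n → Prop) :
    Pr p n (fun ω => P ω ∨ Q ω) ≤ Pr p n P + Pr p n Q := by
  classical
  unfold Pr
  rw [← Finset.sum_add_distrib]
  refine Finset.sum_le_sum fun ω _ => ?_
  have := sampleWeight_nonneg hp ω
  by_cases h1 : P ω <;> by_cases h2 : Q ω <;> simp [h1, h2, this]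

lemma Pr_exists {p : ℕ → ℝ} (hp : ∀ j, 0 ≤ p j ∧ p j ≤ 1) {n : ℕ} {ι : Type} [DecidableEq ι]
    (T : Finset ι) (P : ι → Sample n → Prop) :
    Pr p n (fun ω => ∃ t ∈ T, P t ω) ≤ ∑ t ∈ T, Pr p n (P t) := by
  induction T using Finset.induction_on with
  | empty => simp [Pr]
  | insert t T ht ih =>
    rw [Finset.sum_insert ht]
    refine le_trans ?_ (add_le_add le_rfl ih)
    refine le_trans (Pr_mono hp ?_) (Pr_or hp _ _)
    intro ω
    simp

lemma prod_absent_eq {n : ℕ} (ω : Sample n) (D : Finset (EdgeIdx n)) [Decidable (∀ e ∈ D, ω e = false)] :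
    (∏ e ∈ D, if ω e then (0 : ℝ) else 1) = if (∀ e ∈ D, ω e = false) then 1 else 0 := by
  split_ifs with h
  · exact Finset.prod_eq_one fun e he => by simp [h e he]
  · push Not at h
    obtain ⟨e, he, h⟩ := h
    exact Finset.prod_eq_zero he (by simpa using h)

lemma Pr_absent (p : ℕ → ℝ) {n : ℕ} (D : Finset (EdgeIdx n)) :
    Pr p n (fun ω => ∀ e ∈ D, ω e = false) = ∏ e ∈ D, (1 - p (elen e)) := by
  classical
  rw [Pr_eq_Ex, ← Ex_absent]
  congr 1
  funext ω
  rw [prod_absent_eq]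
  congr

lemma Pr_blocks (p : ℕ → ℝ) {n : ℕ} {ι : Type} [DecidableEq ι] (B : ι → Finset (EdgeIdx n))
    (T : Finset ι) (hB : ∀ s ∈ T, ∀ t ∈ T, s ≠ t → Disjoint (B s) (B t)) :
    Pr p n (fun ω => ∀ t ∈ T, ¬ ∀ e ∈ B t, ω e = false)
      = ∏ t ∈ T, (1 - ∏ e ∈ B t, (1 - p (elen e))) := by
  classical
  have h := Ex_blocks p n B T hB ∅ (by simp)
  simp only [Finset.prod_empty, one_mul] at h
  rw [← h, Pr_eq_Ex]
  congr 1
  funext ω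
  simp only [prod_absent_eq]
  split_ifs with h
  · symm
    refine Finset.prod_eq_one fun t ht => ?_
    rw [if_neg (h t ht), sub_zero]
  · symm
    push Not at h
    obtain ⟨t, ht, h⟩ := h
    exact Finset.prod_eq_zero ht (by rw [if_pos h, sub_self])

/-- Almost surely, no edge of probability zero is present. -/
lemma Pr_null {p : ℕ → ℝ} (hp : ∀ j, 0 ≤ p j ∧ p j ≤ 1) (n : ℕ) :
    Pr p n (fun ω => ∃ e : EdgeIdx n, p (elen e) = 0 ∧ ω e = true) = 0 := by
  classical
  have h := Pr_absent p (Finset.univ.filter fun e : EdgeIdx n => p (elen e) = 0)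
  rw [Finset.prod_eq_one (fun e he => by rw [Finset.mem_filter] at he; rw [he.2]; ring)] at h
  have h2 := Pr_compl p (fun ω : Sample n => ∀ e ∈ (Finset.univ.filter fun e : EdgeIdx n => p (elen e) = 0),
    ω e = false)
  refine le_antisymm ?_ (Pr_nonneg hp _)
  have h3 : Pr p n (fun ω => ∃ e : EdgeIdx n, p (elen e) = 0 ∧ ω e = true) ≤ _ :=
    Pr_mono hp (Q := fun ω => ¬ ∀ e ∈ (Finset.univ.filter fun e : EdgeIdx n => p (elen e) = 0),
    ω e = false) (by
      rintro ω ⟨e, he, h⟩ hh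
      have := hh e (by simp [he])
      simp [this] at h)
  linarith

/-- All edges of length `d` starting in `[lo, lo+r]` are absent with probability
at most `(1 - p d)^(r+1)`. -/
lemma Pr_row {p : ℕ → ℝ} (hp : ∀ j, 0 ≤ p j ∧ p j ≤ 1) {n d lo r : ℕ} (hd : 0 < d)
    (hn : lo + r + d < n) :
    Pr p n (fun ω => ∀ e : EdgeIdx n, e.1.2.val = e.1.1.val + d → lo ≤ e.1.1.val →
      e.1.1.val ≤ lo + r → ω e = false) ≤ (1 - p d) ^ (r + 1) := by
  classical
  set D := Finset.univ.filter fun e : EdgeIdx n => e.1.2.val = e.1.1.val + d ∧ lo ≤ e.1.1.val ∧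
      e.1.1.val ≤ lo + r with hD
  have h1 := Pr_absent p D
  have h2 : ∏ e ∈ D, (1 - p (elen e)) = (1 - p d) ^ D.card := by
    rw [Finset.prod_congr rfl (g := fun _ => 1 - p d), Finset.prod_const]
    intro e he
    rw [hD, Finset.mem_filter] at he
    have : elen e = d := by unfold elen; omega
    rw [this]
  have h3 : r + 1 ≤ D.card := by
    have : (Finset.range (r+1)).card ≤ D.card := by
      refine Finset.card_le_card_of_injOn
        (fun u => if h : u < r + 1 then
          (⟨(⟨lo + u, by omega⟩, ⟨lo + u + d, by omega⟩), by simp [Fin.lt_def, hd]⟩ : EdgeIdx n)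
          else ⟨(⟨lo, by omega⟩, ⟨lo + d, by omega⟩), by simp [Fin.lt_def, hd]⟩) ?_ ?_
      · intro u hu
        have hu : u < r + 1 := by simpa using hu
        simp only [hu, dif_pos, hD, Finset.coe_filter, Set.mem_ofPred_eq, Finset.mem_univ, true_and]
        omega
      · intro u hu v hv huv
        have hu : u < r + 1 := by simpa using hu
        have hv : v < r + 1 := by simpa using hv
        simp only [hu, hv, dif_pos] at huv
        have := congrArg (fun e : EdgeIdx n => e.1.1.val) huv
        simp only at this
        omega
    simpa using this
  calc _ ≤ Pr p n (fun ω => ∀ e ∈ D, ω e = false) := by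
        refine Pr_mono hp fun ω h e he => ?_
        rw [hD, Finset.mem_filter] at he
        exact h e he.2.1 he.2.2.1 he.2.2.2
    _ = (1 - p d) ^ D.card := by rw [h1, h2]
    _ ≤ _ := pow_le_pow_of_le_one (by linarith [(hp d).2]) (by linarith [(hp d).1]) h3

/-! ### The sentences -/

/-- Atomic formula `s ≤ t`. -/
def fle {α : Type} (s t : α) : Lle.Formula α :=
  Language.Relations.formula₂ (L := Lle) (leRel.le : Lle.Relations 2) (Language.var s) (Language.var t)

/-- Atomic formula `s ~ t`. -/
def fadj {α : Type} (s t : α) : Lle.Formula α :=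
  Language.Relations.formula₂ (L := Lle) (leRel.adj : Lle.Relations 2) (Language.var s) (Language.var t)

lemma realize_fle {n : ℕ} (ω : Sample n) {α : Type} (s t : α) (v : α → Fin n) :
    @Language.Formula.Realize _ _ (leStructure ω) _ (fle s t) v ↔ v s ≤ v t := by
  let _ := leStructure ω
  exact Language.Formula.realize_rel₂ (L := Lle) (R := (leRel.le : Lle.Relations 2))

lemma realize_fadj {n : ℕ} (ω : Sample n) {α : Type} (s t : α) (v : α → Fin n) :
    @Language.Formula.Realize _ _ (leStructure ω) _ (fadj s t) v ↔ sampleAdj ω (v s) (v t) := by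
  let _ := leStructure ω
  exact Language.Formula.realize_rel₂ (L := Lle) (R := (leRel.adj : Lle.Relations 2))

/-- The first and the last vertices are not adjacent. -/
noncomputable def psiA : Lle.Sentence :=
  Language.Formula.iExs (Fin 2) (
    (Language.Formula.iAlls (Fin 1)
      (fle (Sum.inl (Sum.inr 0)) (Sum.inr 0) ⊓ fle (Sum.inr 0) (Sum.inl (Sum.inr 1))
        : Lle.Formula ((Empty ⊕ Fin 2) ⊕ Fin 1))) ⊓
    ∼(fadj (Sum.inr 0) (Sum.inr 1)))

lemma sat_psiA {n : ℕ} (ω : Sample (n + 1)) : SatLe ω psiA ↔ ¬ adjVal ω 0 n := by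
  let _ := leStructure ω
  unfold SatLe psiA Language.Sentence.Realize
  simp only [Language.Formula.realize_iExs, Language.Formula.realize_iAlls,
    Language.Formula.realize_inf, Language.Formula.realize_not, realize_fle, realize_fadj,
    Sum.elim_inl, Sum.elim_inr]
  constructor
  · rintro ⟨t, h1, h2⟩
    have h3 := (h1 (fun _ => 0)).1
    have h4 := (h1 (fun _ => Fin.last n)).2
    have h5 : t 0 = 0 := by simpa using h3
    have h6 : t 1 = Fin.last n := by simpa using h4
    rw [h5, h6] at h2
    exact h2
  · intro h
    exact ⟨![0, Fin.last n], fun z => ⟨Fin.zero_le _, Fin.le_last _⟩, h⟩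

/-- There is a weak cut: a vertex `x` with `k` vertices before it and `k` after it, such that
no edge goes from `[·, x]` to `[x + g, ·]`. -/
noncomputable def psiB (k g : ℕ) : Lle.Sentence :=
  Language.Formula.iExs (Fin (2 * k + 1)) (
    (Language.Formula.iInf fun ij : {ij : Fin (2 * k + 1) × Fin (2 * k + 1) // ij.1 < ij.2} =>
      (∼(fle (Sum.inr ij.1.2) (Sum.inr ij.1.1)) : Lle.Formula (Empty ⊕ Fin (2 * k + 1)))) ⊓
    (Language.Formula.iAlls (Fin (g + 1)) (
      (Language.Formula.iInf fun ij : {ij : Fin (g + 1) × Fin (g + 1) // ij.1 < ij.2} =>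
        (∼(fle (Sum.inr ij.1.2) (Sum.inr ij.1.1)) :
          Lle.Formula ((Empty ⊕ Fin (2 * k + 1)) ⊕ Fin (g + 1)))).imp
      ((fle (Sum.inl (Sum.inr ⟨k, by omega⟩)) (Sum.inr 0)).imp
        (Language.Formula.iAlls (Fin 1) (
          ((fle (Sum.inr 0) (Sum.inl (Sum.inl (Sum.inr ⟨k, by omega⟩)))).imp
            (∼(fadj (Sum.inr 0) (Sum.inl (Sum.inr (Fin.last g)))))
            : Lle.Formula (((Empty ⊕ Fin (2 * k + 1)) ⊕ Fin (g + 1)) ⊕ Fin 1))))))))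

lemma strictMono_ge {m n : ℕ} (t : Fin m → Fin n) (ht : StrictMono t) (i d : ℕ) (h : i + d < m) :
    (t ⟨i, by omega⟩).val + d ≤ (t ⟨i + d, h⟩).val := by
  induction d with
  | zero => simp
  | succ d ih =>
    have h1 := ih (by omega)
    have h2 : t ⟨i + d, by omega⟩ < t ⟨i + (d + 1), h⟩ := ht (by simp [Fin.lt_def])
    rw [Fin.lt_def] at h2
    omega

lemma sat_psiB {n : ℕ} (ω : Sample n) (k g : ℕ) : SatLe ω (psiB k g) ↔
    ∃ x : ℕ, k ≤ x ∧ x + k < n ∧ ∀ u v : ℕ, u ≤ x → x + g ≤ v → v < n → ¬ adjVal ω u v := by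
  let _ := leStructure ω
  unfold SatLe psiB Language.Sentence.Realize
  simp only [Language.Formula.realize_iExs, Language.Formula.realize_iAlls,
    Language.Formula.realize_inf, Language.Formula.realize_not, Language.Formula.realize_imp,
    Language.Formula.realize_iInf, realize_fle, realize_fadj,
    Sum.elim_inl, Sum.elim_inr, not_le, Subtype.forall, Prod.forall]
  constructor
  · rintro ⟨t, h1, h2⟩
    have ht : StrictMono t := fun i j hij => h1 i j hij
    refine ⟨(t ⟨k, by omega⟩).val, ?_, ?_, ?_⟩
    · have := strictMono_ge t ht 0 k (by omega)
      simp only [zero_add] at this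
      omega
    · have := strictMono_ge t ht k k (by omega)
      have := (t ⟨k + k, by omega⟩).isLt
      omega
    · intro u v hu hv hvn
      have hh := h2 (fun i => ⟨v - g + i.val, by omega⟩)
        (by intro i j hij; simp only [Fin.lt_def] at hij ⊢; omega)
        (by simp only [Fin.le_def, Fin.val_zero]; omega)
        (fun _ => ⟨u, by omega⟩) (by simpa [Fin.le_def] using hu)
      unfold sampleAdj at hh
      have e : v - g + g = v := by omega
      simpa [e] using hh
  · rintro ⟨x, hx1, hx2, hx⟩
    refine ⟨fun i => ⟨x - k + i.val, by omega⟩, ?_, ?_⟩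
    · intro i j hij
      simp only [Fin.lt_def] at hij ⊢; omega
    · intro s hs h0 u hu
      have hsm : StrictMono s := fun i j hij => hs i j hij
      have h3 := strictMono_ge s hsm 0 g (by omega)
      have e : (⟨0 + g, by omega⟩ : Fin (g + 1)) = Fin.last g := by ext; simp
      rw [e] at h3
      have e0 : (⟨0, by omega⟩ : Fin (g + 1)) = 0 := rfl
      rw [e0] at h3
      simp only [Fin.le_def] at h0 hu
      exact hx _ _ (by omega) (by omega) (s (Fin.last g)).isLt

/-! ### Limits -/

lemma limits_of {u : ℕ → ℝ} {ε : ℝ} (h0 : ∀ n, 0 ≤ u n) (h1 : ∀ n, u n ≤ 1)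
    (hs : ∀ δ > 0, ∀ N, ∃ n ≥ N, 1 - δ ≤ u n) (hl : ∀ N, ∃ n ≥ N, u n ≤ ε) :
    limsup u atTop = 1 ∧ liminf u atTop ≤ ε := by
  have b1 : IsBoundedUnder (· ≤ ·) atTop u := isBoundedUnder_of ⟨1, h1⟩
  have b2 : IsBoundedUnder (· ≥ ·) atTop u := isBoundedUnder_of ⟨0, h0⟩
  refine ⟨le_antisymm ?_ ?_, ?_⟩
  · exact limsup_le_of_le b2.isCoboundedUnder_le (Eventually.of_forall h1)
  · refine le_of_forall_sub_le fun δ hδ => ?_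
    refine le_limsup_of_frequently_le ?_ b1
    rw [frequently_atTop]
    exact hs δ hδ
  · refine liminf_le_of_frequently_le ?_ b2
    rw [frequently_atTop]
    exact hl

lemma adjVal_lt {n : ℕ} {ω : Sample n} {u v : ℕ} (huv : u < v) (h : adjVal ω u v) :
    ∃ e : EdgeIdx n, e.1.1.val = u ∧ e.1.2.val = v ∧ ω e = true := by
  obtain ⟨e, he, h | h⟩ := h
  · exact ⟨e, h.1, h.2, he⟩
  · have : e.1.1.val < e.1.2.val := e.2
    omega

/-- The sequence obtained from `a` by placing `a i` at position `f i`. -/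
noncomputable def spread (f : ℕ → ℕ) (a : ℕ → ℝ) : ℕ → ℝ := Function.extend f a (fun _ => 0)

lemma spread_apply {f : ℕ → ℕ} (hf : StrictMono f) (a : ℕ → ℝ) (i : ℕ) : spread f a (f i) = a i :=
  hf.injective.extend_apply _ _ _

lemma spread_zero {f : ℕ → ℕ} (a : ℕ → ℝ) (j : ℕ) (h : ∀ i, f i ≠ j) : spread f a j = 0 :=
  Function.extend_apply' _ _ _ (by rintro ⟨i, hi⟩; exact h i hi)

lemma spread_mem {f : ℕ → ℕ} (hf : StrictMono f) {a : ℕ → ℝ} (ha : ∀ i, 0 < a i ∧ a i ≤ 1) (j : ℕ) :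
    0 ≤ spread f a j ∧ spread f a j ≤ 1 := by
  by_cases h : ∃ i, f i = j
  · obtain ⟨i, rfl⟩ := h
    rw [spread_apply hf]
    exact ⟨(ha i).1.le, (ha i).2⟩
  · push Not at h
    rw [spread_zero a j h]
    norm_num

/-! ### Case A: infinitely many terms are equal to one -/

lemma caseA (a : ℕ → ℝ) (ha : ∀ i, 0 < a i ∧ a i ≤ 1) (ε : ℝ) (hε : 0 < ε)
    (h1 : ∀ N, ∃ i ≥ N, a i = 1) :
    ∃ (f : ℕ → ℕ) (p : ℕ → ℝ) (ψ : Lle.Sentence),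
      StrictMono f ∧ 1 ≤ f 0 ∧
      (∀ i, p (f i) = a i) ∧
      (∀ j, (∀ i, f i ≠ j) → p j = 0) ∧
      limsup (fun n => ProbLe p n ψ) atTop = 1 ∧
      liminf (fun n => ProbLe p n ψ) atTop ≤ ε := by
  classical
  set f : ℕ → ℕ := fun i => 2 * i + 2 with hfd
  have hf : StrictMono f := fun i j h => by simp only [hfd]; omega
  have hp := spread_mem hf ha
  refine ⟨f, spread f a, psiA, hf, by simp [hfd], spread_apply hf a, spread_zero a, ?_⟩
  refine limits_of (fun n => Pr_nonneg hp _) (fun n => Pr_le_one hp _) ?_ ?_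
  · intro δ hδ N
    refine ⟨2 * N + 1 + 1, by omega, ?_⟩
    have hc := Pr_compl (spread f a) (fun ω : Sample (2 * N + 1 + 1) => SatLe ω psiA)
    have hz := Pr_null hp (2 * N + 1 + 1)
    have hle : Pr (spread f a) (2 * N + 1 + 1) (fun ω => ¬ SatLe ω psiA) ≤ _ :=
      Pr_mono hp (Q := fun ω => ∃ e : EdgeIdx (2 * N + 1 + 1),
        spread f a (elen e) = 0 ∧ ω e = true) (by
        intro ω h
        rw [sat_psiA, not_not] at h
        obtain ⟨e, h1, h2, h3⟩ := adjVal_lt (by omega) h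
        refine ⟨e, spread_zero a _ ?_, h3⟩
        intro i
        simp only [hfd, elen, h1, h2]
        omega)
    unfold ProbLe
    linarith
  · intro N
    obtain ⟨i, hi, hai⟩ := h1 N
    refine ⟨f i + 1, by simp only [hfd]; omega, ?_⟩
    have hr := Pr_row hp (n := f i + 1) (d := f i) (lo := 0) (r := 0) (by simp [hfd]) (by omega)
    rw [spread_apply hf, hai] at hr
    have hle : ProbLe (spread f a) (f i + 1) psiA ≤ _ := Pr_mono hp (Q := fun ω =>
      ∀ e : EdgeIdx (f i + 1), e.1.2.val = e.1.1.val + f i → 0 ≤ e.1.1.val →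
      e.1.1.val ≤ 0 + 0 → ω e = false) (by
        intro ω h e h1 _ h2
        rw [sat_psiA] at h
        by_contra hh
        exact h ⟨e, by simpa using hh, Or.inl ⟨by omega, by omega⟩⟩)
    have hz : (1 - (1 : ℝ)) ^ (0 + 1) = 0 := by norm_num
    rw [hz] at hr
    linarith

/-! ### Case B: all but finitely many terms are less than one -/

/-- The construction of the positions in case B. -/
def posB (j0 : ℕ) (need : ℕ → ℕ → ℕ) : ℕ → ℕ
  | 0 => 1
  | i + 1 => posB j0 need i + 1 + (if i + 1 < j0 then 0 else need i (posB j0 need i))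

lemma posB_strictMono (j0 : ℕ) (need : ℕ → ℕ → ℕ) : StrictMono (posB j0 need) :=
  strictMono_nat_of_lt_succ fun i => by rw [posB]; omega

lemma posB_small (j0 : ℕ) (need : ℕ → ℕ → ℕ) (i : ℕ) (h : i < j0) : posB j0 need i = i + 1 := by
  induction i with
  | zero => rfl
  | succ i ih => rw [posB, if_pos h, ih (by omega)]

lemma posB_need (j0 : ℕ) (need : ℕ → ℕ → ℕ) (i : ℕ) (h : j0 ≤ i + 1) :
    need i (posB j0 need i) ≤ posB j0 need (i + 1) := by
  conv_rhs => rw [posB]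
  rw [if_neg (by omega)]; omega

lemma cover {f s : ℕ → ℕ} {j0 i y : ℕ} (hs : ∀ j, j0 ≤ j → s (j + 1) ≤ f j)
    (hi : j0 ≤ i) (h1 : s j0 ≤ y) (h2 : y ≤ f i) : ∃ j, j0 ≤ j ∧ j ≤ i ∧ s j ≤ y ∧ y ≤ f j := by
  induction i, hi using Nat.le_induction with
  | base => exact ⟨j0, le_rfl, le_rfl, h1, h2⟩
  | succ i hi ih =>
    by_cases h : y ≤ f i
    · obtain ⟨j, a1, a2, a3, a4⟩ := ih h
      exact ⟨j, a1, by omega, a3, a4⟩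
    · have := hs i hi
      exact ⟨i + 1, by omega, le_rfl, by omega, h2⟩

/-- With high probability there is a weak cut when `n = f (i+1)`. -/
lemma caseB_high {a : ℕ → ℝ} (ha : ∀ i, 0 < a i ∧ a i ≤ 1) {f : ℕ → ℕ} (hf : StrictMono f)
    {j0 g k i T : ℕ} (hg : ∀ j, j < j0 → f j < g)
    {c : ℝ} (hc0 : 0 < c) (hc1 : c ≤ 1) (hc : ∀ l, j0 ≤ l → l ≤ i → a l ≤ 1 - c)
    (hn : k + T * f i + k + 1 ≤ f (i + 1)) (hg0 : 0 < g) :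
    1 - (1 - c ^ (f i * (f i + 1))) ^ T ≤ ProbLe (spread f a) (f (i + 1)) (psiB k g) := by
  classical
  have hp := spread_mem hf ha
  set p := spread f a with hpd
  set n := f (i + 1) with hnd
  set L := f i with hL
  set B : ℕ → Finset (EdgeIdx n) := fun t => Finset.univ.filter fun e =>
    k + t * L < e.1.1.val ∧ e.1.1.val ≤ k + (t + 1) * L ∧ k + (t + 1) * L + g ≤ e.1.2.val ∧
      e.1.2.val ≤ e.1.1.val + L with hB
  have hdisj : ∀ s ∈ Finset.range T, ∀ t ∈ Finset.range T, s ≠ t → Disjoint (B s) (B t) := by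
    intro s _ t _ hst
    rw [Finset.disjoint_left]
    intro e he1 he2
    simp only [hB, Finset.mem_filter, Finset.mem_univ, true_and] at he1 he2
    rcases lt_or_gt_of_ne hst with h | h
    · have := Nat.mul_le_mul_right L (show s + 1 ≤ t from h)
      omega
    · have := Nat.mul_le_mul_right L (show t + 1 ≤ s from h)
      omega
  have hbl := Pr_blocks p B (Finset.range T) hdisj
  have hcard : ∀ t, (B t).card ≤ L * (L + 1) := by
    intro t
    have : (B t).card ≤ (Finset.Ioc (k + t * L) (k + (t + 1) * L) ×ˢ Finset.range (L + 1)).card := by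
      refine Finset.card_le_card_of_injOn (fun e => (e.1.1.val, elen e)) ?_ ?_
      · intro e he
        simp only [hB, Finset.coe_filter, Set.mem_ofPred_eq, Finset.mem_univ, true_and] at he
        simp only [Finset.coe_product, Set.mem_prod, Finset.mem_coe, Finset.mem_Ioc,
          Finset.mem_range, elen]
        omega
      · intro e _ e' _ h
        simp only [Prod.mk.injEq, elen] at h
        have h1 : e.1.1.val < e.1.2.val := e.2
        have h2 : e'.1.1.val < e'.1.2.val := e'.2
        apply Subtype.ext
        apply Prod.ext
        · exact Fin.ext h.1
        · exact Fin.ext (by omega)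
    rw [Finset.card_product, Nat.card_Ioc, Finset.card_range] at this
    have e : k + (t + 1) * L - (k + t * L) = L := by
      rw [Nat.add_sub_add_left, Nat.add_mul, Nat.add_sub_cancel_left, one_mul]
    rwa [e] at this
  have hprod : ∀ t, c ^ (L * (L + 1)) ≤ ∏ e ∈ B t, (1 - p (elen e)) := by
    intro t
    calc c ^ (L * (L + 1)) ≤ c ^ (B t).card := pow_le_pow_of_le_one hc0.le hc1 (hcard t)
      _ = ∏ e ∈ B t, c := by rw [Finset.prod_const]
      _ ≤ _ := by
        refine Finset.prod_le_prod (fun _ _ => hc0.le) fun e he => ?_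
        simp only [hB, Finset.mem_filter, Finset.mem_univ, true_and] at he
        by_cases h : ∃ l, f l = elen e
        · obtain ⟨l, hl⟩ := h
          rw [← hl, hpd, spread_apply hf]
          have hl1 : j0 ≤ l := by
            by_contra hlt
            have := hg l (by omega)
            unfold elen at hl
            omega
          have hl2 : l ≤ i := by
            rw [← hf.le_iff_le, hl]
            unfold elen
            omega
          have := hc l hl1 hl2
          linarith
        · push Not at h
          rw [hpd, spread_zero a _ h]
          linarith
  have hub : ∏ t ∈ Finset.range T, (1 - ∏ e ∈ B t, (1 - p (elen e)))
      ≤ (1 - c ^ (L * (L + 1))) ^ T := by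
    calc _ ≤ ∏ t ∈ Finset.range T, (1 - c ^ (L * (L + 1))) := by
          refine Finset.prod_le_prod (fun t _ => ?_) fun t _ => by linarith [hprod t]
          have : ∏ e ∈ B t, (1 - p (elen e)) ≤ 1 :=
            Finset.prod_le_one (fun e _ => by linarith [(hp (elen e)).2])
              (fun e _ => by linarith [(hp (elen e)).1])
          linarith
      _ = _ := by rw [Finset.prod_const, Finset.card_range]
  have hnull := Pr_null hp n
  have hcompl := Pr_compl p (fun ω : Sample n => SatLe ω (psiB k g))
  have hle : Pr p n (fun ω => ¬ SatLe ω (psiB k g)) ≤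
      Pr p n (fun ω => ∀ t ∈ Finset.range T, ¬ ∀ e ∈ B t, ω e = false) +
      Pr p n (fun ω => ∃ e : EdgeIdx n, p (elen e) = 0 ∧ ω e = true) := by
    refine le_trans (Pr_mono hp ?_) (Pr_or hp _ _)
    intro ω h
    by_contra hcon
    push Not at hcon
    obtain ⟨⟨t, ht, hab⟩, hz⟩ := hcon
    apply h
    rw [sat_psiB]
    have htT := Nat.mul_le_mul_right L (show t + 1 ≤ T from Finset.mem_range.1 ht)
    refine ⟨k + (t + 1) * L, by omega, by omega, ?_⟩
    intro u v hu hv hvn hadj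
    obtain ⟨e, h1, h2, h3⟩ := adjVal_lt (by omega) hadj
    by_cases hlen : v ≤ u + L
    · have he : e ∈ B t := by
        simp only [hB, Finset.mem_filter, Finset.mem_univ, true_and, h1, h2]
        have : (t + 1) * L = t * L + L := by ring
        omega
      have := hab e he
      rw [this] at h3
      exact absurd h3 (by simp)
    · refine hz e ?_ h3
      apply spread_zero
      intro l hl
      unfold elen at hl
      have h4 : f i < f l := by omega
      have h5 : f l < f (i + 1) := by omega
      rw [hf.lt_iff_lt] at h4 h5
      omega
  unfold ProbLe
  linarith

/-- With small probability there is a weak cut when `n = f i + s i + 1`. -/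
lemma caseB_low {a : ℕ → ℝ} (ha : ∀ i, 0 < a i ∧ a i ≤ 1) {f : ℕ → ℕ} (hf : StrictMono f)
    (hf0 : 1 ≤ f 0) {j0 g i : ℕ} {r : ℕ → ℕ} {ε : ℝ} (hε : 0 < ε)
    (hr : ∀ j, (1 - a j) ^ (r j + 1) ≤ ε / 4 * (1 / 2) ^ j)
    (hfr : ∀ j, j0 ≤ j → g + r (j + 1) ≤ f j)
    (hfs : ∀ j, j0 ≤ j → f j + (g + r j) ≤ f (j + 1)) (hi : j0 ≤ i) (hgi : g + r i ≤ f i) :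
    ProbLe (spread f a) (f i + (g + r i) + 1) (psiB (g + r j0 + g) g) ≤ ε := by
  classical
  have hp := spread_mem hf ha
  set p := spread f a with hpd
  set n := f i + (g + r i) + 1 with hnd
  have hfit : ∀ j, j0 ≤ j → j ≤ i → g + r j + f j < n := by
    intro j h1 h2
    rcases Nat.lt_or_ge j i with h | h
    · have := hfs j h1
      have := hf.monotone (show j + 1 ≤ i from h)
      omega
    · have : j = i := by omega
      subst this; omega
  have hpos : ∀ j, 0 < f j := fun j => by
    have := hf.monotone (Nat.zero_le j)
    omega
  let A : ℕ → ℕ → Sample n → Prop := fun lo j ω => ∀ e : EdgeIdx n,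
    e.1.2.val = e.1.1.val + f j → lo ≤ e.1.1.val → e.1.1.val ≤ lo + r j → ω e = false
  have hA : ∀ lo j, lo + r j + f j < n → Pr p n (A lo j) ≤ ε / 4 * (1 / 2) ^ j := by
    intro lo j h
    refine le_trans (Pr_row hp (hpos j) h) ?_
    rw [hpd, spread_apply hf]
    exact hr j
  have hnA : ∀ lo j ω, ¬ A lo j ω → ∃ u, lo ≤ u ∧ u ≤ lo + r j ∧ u + f j < n ∧
      adjVal ω u (u + f j) := by
    intro lo j ω h
    simp only [A] at h
    push Not at h
    obtain ⟨e, h1, h2, h3, h4⟩ := h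
    refine ⟨e.1.1.val, h2, h3, ?_, e, by simpa using h4, Or.inl ⟨rfl, h1⟩⟩
    rw [← h1]; exact e.1.2.isLt
  have hmain : ProbLe p n (psiB (g + r j0 + g) g) ≤
      Pr p n (fun ω => ∃ j ∈ Finset.Icc j0 i, A g j ω) +
      Pr p n (fun ω => ∃ j ∈ Finset.Icc j0 i, A (n - 1 - (g + r j) - f j) j ω) := by
    refine le_trans (Pr_mono hp ?_) (Pr_or hp _ _)
    intro ω h
    rw [sat_psiB] at h
    obtain ⟨x, hx1, hx2, hx⟩ := h
    by_contra hcon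
    push Not at hcon
    obtain ⟨c1, c2⟩ := hcon
    by_cases hxi : x ≤ f i
    · obtain ⟨j, b1, b2, b3, b4⟩ := cover (f := f) (s := fun j => g + r j) hfr hi
        (show g + r j0 ≤ x by omega) hxi
      obtain ⟨u, d1, d2, d3, d4⟩ := hnA g j ω (c1 j (Finset.mem_Icc.2 ⟨b1, b2⟩))
      exact hx u (u + f j) (by omega) (by omega) d3 d4
    · obtain ⟨j, b1, b2, b3, b4⟩ := cover (f := f) (s := fun j => g + r j) (y := n - 1 - g - x)
        hfr hi (show g + r j0 ≤ n - 1 - g - x by omega) (by omega)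
      have := hfit j b1 b2
      obtain ⟨u, d1, d2, d3, d4⟩ := hnA _ j ω (c2 j (Finset.mem_Icc.2 ⟨b1, b2⟩))
      exact hx u (u + f j) (by omega) (by omega) d3 d4
  have hsum : ∑ j ∈ Finset.Icc j0 i, ε / 4 * (1 / 2 : ℝ) ^ j ≤ ε / 2 := by
    calc _ ≤ ∑ j ∈ Finset.range (i + 1), ε / 4 * (1 / 2 : ℝ) ^ j := by
          refine Finset.sum_le_sum_of_subset_of_nonneg ?_ (fun _ _ _ => by positivity)
          intro j hj
          rw [Finset.mem_Icc] at hj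
          rw [Finset.mem_range]; omega
      _ = ε / 4 * ∑ j ∈ Finset.range (i + 1), (1 / 2 : ℝ) ^ j := by rw [Finset.mul_sum]
      _ ≤ ε / 4 * 2 := by
          have := sum_geometric_two_le (i + 1)
          gcongr
      _ = ε / 2 := by ring
  have e1 := (Pr_exists hp (Finset.Icc j0 i) (fun j => A g j)).trans
    ((Finset.sum_le_sum fun j hj => hA g j (by
      rw [Finset.mem_Icc] at hj
      exact hfit j hj.1 hj.2)).trans hsum)
  have e2 := (Pr_exists hp (Finset.Icc j0 i) (fun j => A (n - 1 - (g + r j) - f j) j)).trans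
    ((Finset.sum_le_sum fun j hj => hA _ j (by
      rw [Finset.mem_Icc] at hj
      have := hfit j hj.1 hj.2
      omega)).trans hsum)
  linarith

lemma caseB (a : ℕ → ℝ) (ha : ∀ i, 0 < a i ∧ a i ≤ 1) (ε : ℝ) (hε : 0 < ε)
    (h1 : ∃ N, ∀ i ≥ N, a i < 1) :
    ∃ (f : ℕ → ℕ) (p : ℕ → ℝ) (ψ : Lle.Sentence),
      StrictMono f ∧ 1 ≤ f 0 ∧
      (∀ i, p (f i) = a i) ∧
      (∀ j, (∀ i, f i ≠ j) → p j = 0) ∧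
      limsup (fun n => ProbLe p n ψ) atTop = 1 ∧
      liminf (fun n => ProbLe p n ψ) atTop ≤ ε := by
  classical
  obtain ⟨N0, hN0⟩ := h1
  set j0 := N0 + 1 with hj0
  set g := j0 + 1 with hgd
  have hr : ∀ j, ∃ r : ℕ, (1 - a j) ^ (r + 1) ≤ ε / 4 * (1 / 2) ^ j := by
    intro j
    obtain ⟨r, hr⟩ := exists_pow_lt_of_lt_one (show 0 < ε / 4 * (1 / 2) ^ j by positivity)
      (show 1 - a j < 1 by linarith [(ha j).1])
    refine ⟨r, le_trans ?_ hr.le⟩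
    exact pow_le_pow_of_le_one (by linarith [(ha j).2]) (by linarith [(ha j).1]) (by omega)
  choose r hr using hr
  have hc : ∀ i, ∃ c : ℝ, 0 < c ∧ c ≤ 1 ∧ ∀ l, j0 ≤ l → l ≤ i → a l ≤ 1 - c := by
    intro i
    induction i with
    | zero => exact ⟨1, one_pos, le_rfl, fun l h1 h2 => by omega⟩
    | succ i ih =>
      obtain ⟨c, h1, h2, h3⟩ := ih
      by_cases hi : j0 ≤ i + 1
      · refine ⟨min c (1 - a (i + 1)), lt_min h1 (by linarith [hN0 (i + 1) (by omega)]),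
          (min_le_left _ _).trans h2, fun l hl1 hl2 => ?_⟩
        rcases Nat.lt_or_ge l (i + 1) with h | h
        · have := h3 l hl1 (by omega)
          have := min_le_left c (1 - a (i + 1))
          linarith
        · have : l = i + 1 := by omega
          subst this
          have := min_le_right c (1 - a (i + 1))
          linarith
      · exact ⟨c, h1, h2, fun l hl1 hl2 => by omega⟩
  choose c hc0 hc1 hc using hc
  have hT : ∀ i L : ℕ, ∃ T : ℕ, (1 - c i ^ (L * (L + 1))) ^ T < 1 / ((i : ℝ) + 1) := by
    intro i L
    refine exists_pow_lt_of_lt_one (by positivity) ?_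
    have := pow_pos (hc0 i) (L * (L + 1))
    linarith
  choose T hT using hT
  set k := g + r j0 + g with hk
  set f := posB j0 (fun i L => k + T i L * L + k + 1 + L + (g + r i) + (g + r (i + 1)) +
    (g + r (i + 2))) with hfd
  have hf : StrictMono f := posB_strictMono _ _
  have hneed : ∀ i, j0 ≤ i + 1 → k + T i (f i) * f i + k + 1 + f i + (g + r i) +
    (g + r (i + 1)) + (g + r (i + 2)) ≤ f (i + 1) := fun i hi =>
    posB_need j0 (fun i L => k + T i L * L + k + 1 + L + (g + r i) + (g + r (i + 1)) +
      (g + r (i + 2))) i hi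
  have hsmall : ∀ j, j < j0 → f j < g := by
    intro j hj
    rw [hfd, posB_small _ _ _ hj]
    omega
  have hf0 : 1 ≤ f 0 := le_refl 1
  have hp := spread_mem hf ha
  refine ⟨f, spread f a, psiB k g, hf, hf0, spread_apply hf a, spread_zero a, ?_⟩
  refine limits_of (fun n => Pr_nonneg hp _) (fun n => Pr_le_one hp _) ?_ ?_
  · intro δ hδ N
    obtain ⟨m, hm⟩ := exists_nat_one_div_lt hδ
    set i := m + N + j0 with hi
    refine ⟨f (i + 1), ?_, ?_⟩
    · have := hf.le_apply (x := i + 1)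
      omega
    · have h := caseB_high (k := k) ha hf hsmall (hc0 i) (hc1 i) (hc i) (T := T i (f i))
        (by have := hneed i (by omega); omega) (by omega)
      have h2 := hT i (f i)
      have h3 : 1 / ((i : ℝ) + 1) ≤ 1 / ((m : ℝ) + 1) := by
        apply one_div_le_one_div_of_le (by positivity)
        have : (m : ℝ) ≤ i := by exact_mod_cast (by omega)
        linarith
      linarith
  · intro N
    set i := N + j0 with hi
    refine ⟨f i + (g + r i) + 1, ?_, ?_⟩
    · have := hf.le_apply (x := i)
      omega
    · have hfr : ∀ j, j0 ≤ j → g + r (j + 1) ≤ f j ∧ g + r j ≤ f j := by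
        intro j hj
        obtain ⟨j, rfl⟩ : ∃ j', j = j' + 1 := ⟨j - 1, by omega⟩
        have := hneed j hj
        have e : j + 1 + 1 = j + 2 := rfl
        rw [e]
        omega
      refine caseB_low ha hf hf0 hε hr (fun j hj => (hfr j hj).1) ?_ (by omega)
        (hfr i (by omega)).2
      intro j hj
      have := hneed j (by omega)
      omega

/-- For every sequence `ā` with `0 < a i ≤ 1` and every `ε > 0` there are a
sequence `p̄` obtained from `ā` by inserting zero terms (the `i`-th term of `ā` being placed
at position `f i` for a strictly increasing `f`) and a sentence `ψ` of `L≤` with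
`limsup Prob(n, p̄; ψ) = 1` and `liminf Prob(n, p̄; ψ) ≤ ε`. -/
theorem statement_8 (a : ℕ → ℝ) (ha : ∀ i, 0 < a i ∧ a i ≤ 1) (ε : ℝ) (hε : 0 < ε) :
    ∃ (f : ℕ → ℕ) (p : ℕ → ℝ) (ψ : Lle.Sentence),
      StrictMono f ∧ 1 ≤ f 0 ∧
      (∀ i, p (f i) = a i) ∧
      (∀ j, (∀ i, f i ≠ j) → p j = 0) ∧
      limsup (fun n => ProbLe p n ψ) atTop = 1 ∧
      liminf (fun n => ProbLe p n ψ) atTop ≤ ε := by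
  by_cases h : ∀ N, ∃ i ≥ N, a i = 1
  · exact caseA a ha ε hε h
  · push Not at h
    obtain ⟨N, hN⟩ := h
    exact caseB a ha ε hε ⟨N, fun i hi => lt_of_le_of_ne (ha i).2 (hN i hi)⟩

end RandomGraph
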